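/- Let d ≥ 3, fix k ∈ {0,…,d−1}, and for every n ∈ ℕ let w_n be the middle component of f^n(T_{d−1−k}) and let r_n be a shortest return word to w_n in u_d. Then limsup_{n→∞} |w_n|/|r_n| ≤ 1/(3 − Λ_d), where Λ_d is the unique real number in (2,3) satisfying Λ_d^{d−1}(Λ_d − 2)^2 = 1; moreover equality limsup_{n→∞} |w_n|/|r_n| = 1/(3 − Λ_d) holds for k = 0 and for k = d−1. -/

import Mathlib

namespace RichRT

variable {A : Type*}

/-- The word `w` occurs in the sequence `u` at position `j`. -/
def OccursAt (w : List A) (u : ℕ → A) (j : ℕ) : Prop :=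
  w = (List.range w.length).map fun t => u (j + t)

/-- `w` is a factor of the infinite sequence `u`. -/
def IsFactorS (w : List A) (u : ℕ → A) : Prop :=
  ∃ j : ℕ, OccursAt w u j

/-- `u` is recurrent: every factor occurs infinitely often. -/
def Recurrent (u : ℕ → A) : Prop :=
  ∀ w : List A, IsFactorS w u → ∀ N : ℕ, ∃ j, N ≤ j ∧ OccursAt w u j

/-- The number of distinct palindromic factors of a finite word. -/
noncomputable def palCount (w : List A) : ℕ :=
  Set.ncard {p : List A | p <:+: w ∧ p.reverse = p}

/-- A finite word of length `n` is rich if it has exactly `n+1` palindromic factors. -/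
def RichWord (w : List A) : Prop := palCount w = w.length + 1

/-- A sequence is rich if all its factors are rich. -/
def RichSeq (u : ℕ → A) : Prop := ∀ w : List A, IsFactorS w u → RichWord w

/-- The prefix of length `k` of the periodic sequence `vvv⋯`. -/
def powPref (v : List A) (k : ℕ) : List A := ((List.replicate k v).flatten).take k

/-- The set of exponents `k/|v|` of fractional powers `v^(k/|v|)` occurring in `u`,
with `|v| ≥ n`. -/
def expSet (u : ℕ → A) (n : ℕ) : Set ℝ :=
  {x | ∃ (v : List A) (k : ℕ), v ≠ [] ∧ n ≤ v.length ∧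
    IsFactorS (powPref v k) u ∧ x = (k : ℝ) / (v.length : ℝ)}

/-- The critical exponent of a sequence, with values in `EReal`. -/
noncomputable def critExp (u : ℕ → A) : EReal :=
  sSup ((fun x : ℝ => (x : EReal)) '' expSet u 0)

/-- The asymptotic critical exponent of a sequence: `⊤` if the critical exponent is `⊤`,
otherwise the limit (= infimum, by monotonicity) over `n` of the suprema of exponents of
powers `v^e` with `|v| ≥ n`. -/
noncomputable def acritExp (u : ℕ → A) : EReal :=
  if critExp u = ⊤ then ⊤
  else ⨅ n : ℕ, sSup ((fun x : ℝ => (x : EReal)) '' expSet u n)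

/-- The morphism `φ_d` on letters: `i ↦ 0(i+1)` for `i < d-1`, `d-1 ↦ 0(d-1)(d-1)`. -/
def phiL (d : ℕ) (i : ℕ) : List ℕ :=
  if i < d - 1 then [0, i + 1] else [0, d - 1, d - 1]

/-- The morphism `φ_d` on words. -/
def phiW (d : ℕ) (w : List ℕ) : List ℕ := w.flatMap (phiL d)

/-- `u` is the fixed point of `φ_d`: it begins with `0` and `φ_d(u) = u`, i.e. the image
of every prefix of `u` is again a prefix of `u`. -/
def IsPhiFixed (d : ℕ) (u : ℕ → ℕ) : Prop :=
  u 0 = 0 ∧ ∀ m : ℕ, OccursAt (phiW d ((List.range m).map u)) u 0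

/-- Left extensions of `w` in `u`. -/
def Lext (u : ℕ → ℕ) (w : List ℕ) : Set (List ℕ) :=
  {x | ∃ i : ℕ, x = i :: w ∧ IsFactorS x u}

/-- Right extensions of `w` in `u`. -/
def Rext (u : ℕ → ℕ) (w : List ℕ) : Set (List ℕ) :=
  {x | ∃ i : ℕ, x = w ++ [i] ∧ IsFactorS x u}

/-- Both-sided extensions of `w` in `u`. -/
def Bext (u : ℕ → ℕ) (w : List ℕ) : Set (List ℕ) :=
  {x | ∃ i j : ℕ, x = i :: (w ++ [j]) ∧ IsFactorS x u}

/-- `w` is a bispecial factor of `u`. -/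
def Bispecial (u : ℕ → ℕ) (w : List ℕ) : Prop :=
  IsFactorS w u ∧ 2 ≤ (Lext u w).ncard ∧ 2 ≤ (Rext u w).ncard

/-- The bilateral order `b(w) = #Bext(w) − #Lext(w) − #Rext(w) + 1`. -/
noncomputable def bord (u : ℕ → ℕ) (w : List ℕ) : ℤ :=
  ((Bext u w).ncard : ℤ) - ((Lext u w).ncard : ℤ) - ((Rext u w).ncard : ℤ) + 1

/-- The palindromes `F_0 = ε`, `F_i = φ(F_{i-1})0`. -/
def Fword (d : ℕ) : ℕ → List ℕ
  | 0 => []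
  | i + 1 => phiW d (Fword d i) ++ [0]

/-- Membership in the set `𝒯` of bispecial triplets. -/
def TripleMem (d : ℕ) (u : ℕ → ℕ) (t : ℕ × List ℕ × ℕ) : Prop :=
  Bispecial u t.2.1 ∧ t.1 < d - 1 ∧ t.2.2 < d - 1 ∧
    IsFactorS (t.1 :: t.2.1) u ∧ IsFactorS (t.2.1 ++ [t.2.2]) u

/-- The map `f` on triplets. -/
def fmap (d : ℕ) (t : ℕ × List ℕ × ℕ) : ℕ × List ℕ × ℕ :=
  ((t.1 + 1) % (d - 1),
   (if t.1 = d - 2 then [d - 1] else []) ++ phiW d t.2.1 ++ [0] ++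
     (if t.2.2 = d - 2 then [d - 1] else []),
   (t.2.2 + 1) % (d - 1))

/-- The initial triplets `T_k = (0, ε, k)` for `k ≤ d-2` and `T_{d-1} = (0, d-1, 0)`. -/
def Tinit (d k : ℕ) : ℕ × List ℕ × ℕ :=
  if k = d - 1 then (0, [d - 1], 0) else (0, ([] : List ℕ), k)

/-- The Parikh vector of a word. -/
def parikh (d : ℕ) (w : List ℕ) : Fin d → ℕ := fun i => w.count (i : ℕ)

/-- The incidence matrix of `φ_d`. -/
def Mmat (d : ℕ) : Matrix (Fin d) (Fin d) ℕ := fun i j => (phiL d (j : ℕ)).count (i : ℕ)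

/-- `r` is a return word to `w` in `u`. -/
def ReturnWord (u : ℕ → ℕ) (w r : List ℕ) : Prop :=
  ∃ j ℓ : ℕ, j < ℓ ∧ OccursAt w u j ∧ OccursAt w u ℓ ∧
    (∀ m, j < m → m < ℓ → ¬ OccursAt w u m) ∧
    r = (List.range (ℓ - j)).map fun t => u (j + t)

/-- `R` is a complete return word to `w` in `u`. -/
def CompleteReturn (u : ℕ → ℕ) (w R : List ℕ) : Prop :=
  ∃ r : List ℕ, ReturnWord u w r ∧ R = r ++ w

theorem occ_nil (u : ℕ → A) (j : ℕ) : OccursAt [] u j := by simp [OccursAt]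

theorem occ_cons (c : A) (w : List A) (u : ℕ → A) (j : ℕ) :
    OccursAt (c :: w) u j ↔ u j = c ∧ OccursAt w u (j + 1) := by
  unfold OccursAt
  rw [List.length_cons, List.range_succ_eq_map]
  simp only [List.map_cons, List.map_map, List.cons.injEq, Nat.add_zero]
  have : ((fun t => u (j + t)) ∘ Nat.succ) = fun t => u (j + 1 + t) := by
    funext t; simp only [Function.comp]; congr 1; omega
  rw [this, eq_comm (a := c)]

theorem occ_append (v w : List A) (u : ℕ → A) (j : ℕ) :
    OccursAt (v ++ w) u j ↔ OccursAt v u j ∧ OccursAt w u (j + v.length) := by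
  induction v generalizing j with
  | nil => simp [occ_nil]
  | cons c v ih =>
    rw [List.cons_append, occ_cons, occ_cons, ih, List.length_cons, and_assoc,
      show j + (v.length + 1) = j + 1 + v.length by omega]

theorem occ_single (c : A) (u : ℕ → A) (j : ℕ) : OccursAt [c] u j ↔ u j = c := by
  simp [occ_cons, occ_nil]

/-- Starting position of the image of the letter at position `i`. -/
def Phi (d : ℕ) (u : ℕ → ℕ) (i : ℕ) : ℕ :=
  ∑ t ∈ Finset.range i, (2 + if d - 1 ≤ u t then 1 else 0)

theorem Phi_succ (d : ℕ) (u : ℕ → ℕ) (i : ℕ) :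
    Phi d u (i + 1) = Phi d u i + (2 + if d - 1 ≤ u i then 1 else 0) := by
  simp [Phi, Finset.sum_range_succ]

theorem length_phiL (d c : ℕ) : (phiL d c).length = 2 + if d - 1 ≤ c then 1 else 0 := by
  unfold phiL
  by_cases h : c < d - 1
  · rw [if_pos h, if_neg (by omega)]; rfl
  · rw [if_neg h, if_pos (by omega)]; rfl

theorem phiW_cons (d c : ℕ) (w : List ℕ) : phiW d (c :: w) = phiL d c ++ phiW d w := by
  simp [phiW]

theorem phiW_append (d : ℕ) (v w : List ℕ) : phiW d (v ++ w) = phiW d v ++ phiW d w := by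
  simp [phiW]

theorem length_phi_range (d : ℕ) (u : ℕ → ℕ) (m : ℕ) :
    (phiW d ((List.range m).map u)).length = Phi d u m := by
  induction m with
  | zero => simp [phiW, Phi]
  | succ m ih =>
    rw [List.range_succ, List.map_append, phiW_append, List.length_append, ih, Phi_succ]
    simp [phiW, length_phiL]

theorem block (d : ℕ) (u : ℕ → ℕ) (hu : IsPhiFixed d u) (m : ℕ) :
    OccursAt (phiL d (u m)) u (Phi d u m) := by
  have h := hu.2 (m + 1)
  rw [List.range_succ, List.map_append, phiW_append, occ_append, length_phi_range] at h
  simpa [phiW] using h.2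

theorem u_Phi (d : ℕ) (u : ℕ → ℕ) (hu : IsPhiFixed d u) (m : ℕ) : u (Phi d u m) = 0 := by
  have h := block d u hu m
  unfold phiL at h
  split_ifs at h <;> simp only [occ_cons] at h <;> exact h.1

theorem u_Phi1 (d : ℕ) (u : ℕ → ℕ) (hu : IsPhiFixed d u) (m : ℕ) :
    u (Phi d u m + 1) = min (u m + 1) (d - 1) := by
  have h := block d u hu m
  unfold phiL at h
  split_ifs at h <;> simp only [occ_cons] at h <;> omega

theorem u_Phi2 (d : ℕ) (u : ℕ → ℕ) (hu : IsPhiFixed d u) (m : ℕ) (hm : d - 1 ≤ u m) :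
    u (Phi d u m + 2) = d - 1 := by
  have h := block d u hu m
  unfold phiL at h
  rw [if_neg (by omega)] at h
  simp only [occ_cons] at h
  exact h.2.2.1

theorem exists_block (d : ℕ) (u : ℕ → ℕ) (t : ℕ) :
    ∃ m, t = Phi d u m ∨ t = Phi d u m + 1 ∨ (t = Phi d u m + 2 ∧ d - 1 ≤ u m) := by
  induction t with
  | zero => exact ⟨0, Or.inl (by simp [Phi])⟩
  | succ t ih =>
    obtain ⟨m, h⟩ := ih
    have hs := Phi_succ d u m
    rcases h with h | h | ⟨h, h'⟩
    · exact ⟨m, by omega⟩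
    · by_cases h' : d - 1 ≤ u m
      · exact ⟨m, by omega⟩
      · rw [if_neg h'] at hs
        exact ⟨m + 1, by omega⟩
    · rw [if_pos h'] at hs
      exact ⟨m + 1, by omega⟩

theorem u_le (d : ℕ) (u : ℕ → ℕ) (hu : IsPhiFixed d u) (t : ℕ) : u t ≤ d - 1 := by
  obtain ⟨m, rfl | rfl | ⟨rfl, h⟩⟩ := exists_block d u t
  · rw [u_Phi d u hu]; omega
  · rw [u_Phi1 d u hu]; omega
  · rw [u_Phi2 d u hu m h]

theorem zero_pos (d : ℕ) (hd : 3 ≤ d) (u : ℕ → ℕ) (hu : IsPhiFixed d u) (t : ℕ) (h : u t = 0) :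
    ∃ m, t = Phi d u m := by
  obtain ⟨m, rfl | rfl | ⟨rfl, h'⟩⟩ := exists_block d u t
  · exact ⟨m, rfl⟩
  · rw [u_Phi1 d u hu] at h; omega
  · rw [u_Phi2 d u hu m h'] at h; omega

theorem occ_phi0 (d : ℕ) (u : ℕ → ℕ) (w : List ℕ) (t : ℕ)
    (h : OccursAt (phiW d w ++ [0]) u t) : u t = 0 := by
  cases w with
  | nil => simpa [phiW, occ_single] using h
  | cons c w =>
    rw [phiW_cons] at h
    unfold phiL at h
    split_ifs at h <;> simp only [List.cons_append, occ_cons] at h <;> exact h.1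

theorem desub (d : ℕ) (_hd : 3 ≤ d) (u : ℕ → ℕ) (hu : IsPhiFixed d u) (w : List ℕ)
    (hw : ∀ c ∈ w, c ≤ d - 1) (i : ℕ) (h : OccursAt (phiW d w ++ [0]) u (Phi d u i)) :
    OccursAt w u i ∧ Phi d u (i + w.length) = Phi d u i + (phiW d w).length := by
  induction w generalizing i with
  | nil => simp [occ_nil, phiW]
  | cons c w ih =>
    rw [phiW_cons, List.append_assoc, occ_append, length_phiL] at h
    obtain ⟨h1, h2⟩ := h
    have hc : c ≤ d - 1 := hw c (by simp)
    have hz := occ_phi0 d u w _ h2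
    have hle := u_le d u hu i
    have hs := Phi_succ d u i
    have h3 := u_Phi1 d u hu i
    have key : u i = c := by
      by_cases hc' : c < d - 1
      · rw [if_neg (by omega)] at hz
        by_cases hi : d - 1 ≤ u i
        · have := u_Phi2 d u hu i hi
          simp only [Nat.add_zero] at hz
          omega
        · unfold phiL at h1
          rw [if_pos hc'] at h1
          simp only [occ_cons] at h1
          omega
      · unfold phiL at h1
        rw [if_neg hc'] at h1
        simp only [occ_cons] at h1
        by_contra hne
        rw [if_neg (by omega)] at hs
        have := u_Phi d u hu (i + 1)
        rw [hs] at this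
        have h4 := h1.2.2.1
        simp only [Nat.add_zero] at this
        rw [show Phi d u i + 1 + 1 = Phi d u i + 2 by omega] at h4
        omega
    rw [key] at hs
    rw [← hs] at h2
    obtain ⟨h5, h6⟩ := ih (fun c hc => hw c (by simp [hc])) (i + 1) h2
    refine ⟨(occ_cons _ _ _ _).2 ⟨key, h5⟩, ?_⟩
    rw [phiW_cons, List.length_append, length_phiL, List.length_cons,
      show i + (w.length + 1) = i + 1 + w.length by omega, h6, hs]
    omega

theorem resub (d : ℕ) (u : ℕ → ℕ) (hu : IsPhiFixed d u) (w : List ℕ)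
    (i : ℕ) (h : OccursAt w u i) :
    OccursAt (phiW d w) u (Phi d u i) ∧
      Phi d u (i + w.length) = Phi d u i + (phiW d w).length := by
  induction w generalizing i with
  | nil => simp [occ_nil, phiW]
  | cons c w ih =>
    rw [occ_cons] at h
    obtain ⟨h1, h2⟩ := h
    have hs := Phi_succ d u i
    have hb := block d u hu i
    rw [h1] at hs hb
    obtain ⟨h5, h6⟩ := ih (i + 1) h2
    rw [phiW_cons]
    refine ⟨(occ_append _ _ _ _).2 ⟨hb, ?_⟩, ?_⟩
    · rw [length_phiL, ← hs]; exact h5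
    · rw [List.length_append, length_phiL, List.length_cons,
        show i + (w.length + 1) = i + 1 + w.length by omega, h6, hs]
      omega

/-- Length of the `n`-th image of the letter `c`. -/
def lam (d : ℕ) : ℕ → ℕ → ℕ
  | 0, _ => 1
  | n + 1, c => lam d n 0 + lam d n (min (c + 1) (d - 1)) +
      if d - 1 ≤ c then lam d n (d - 1) else 0

/-- Length of the `n`-th image of the prefix of length `i`. -/
def Ssum (d : ℕ) (u : ℕ → ℕ) (n i : ℕ) : ℕ := ∑ t ∈ Finset.range i, lam d n (u t)

theorem Ssum_succ (d : ℕ) (u : ℕ → ℕ) (n i : ℕ) :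
    Ssum d u n (i + 1) = Ssum d u n i + lam d n (u i) := by
  simp [Ssum, Finset.sum_range_succ]

theorem Ssum_Phi (d : ℕ) (u : ℕ → ℕ) (hu : IsPhiFixed d u) (n i : ℕ) :
    Ssum d u n (Phi d u i) = Ssum d u (n + 1) i := by
  induction i with
  | zero => simp [Ssum, Phi]
  | succ i ih =>
    rw [Phi_succ, Ssum_succ, ← ih, lam]
    by_cases h : d - 1 ≤ u i
    · rw [if_pos h, if_pos h, show Phi d u i + (2 + 1) = Phi d u i + 2 + 1 by omega, Ssum_succ,
        u_Phi2 d u hu i h, show Phi d u i + 2 = Phi d u i + 1 + 1 by omega, Ssum_succ, Ssum_succ,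
        u_Phi d u hu, u_Phi1 d u hu]
      omega
    · rw [if_neg h, if_neg h, show Phi d u i + (2 + 0) = Phi d u i + 1 + 1 by omega, Ssum_succ,
        Ssum_succ, u_Phi d u hu, u_Phi1 d u hu]
      omega

theorem Ssum_zero (d : ℕ) (u : ℕ → ℕ) (i : ℕ) : Ssum d u 0 i = i := by
  simp [Ssum, lam]

theorem Ssum_mono (d : ℕ) (u : ℕ → ℕ) (n : ℕ) : Monotone (Ssum d u n) :=
  monotone_nat_of_le_succ fun i => by rw [Ssum_succ]; omega

theorem lam_mono (d n : ℕ) : ∀ {c c' : ℕ}, c ≤ c' → lam d n c ≤ lam d n c' := by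
  induction n with
  | zero => intros; simp [lam]
  | succ n ih =>
    intro c c' h
    have := ih (show min (c + 1) (d - 1) ≤ min (c' + 1) (d - 1) by omega)
    rw [lam, lam]
    split_ifs <;> omega

theorem lam_pos (d n c : ℕ) : 0 < lam d n c := by
  induction n generalizing c with
  | zero => simp [lam]
  | succ n ih => rw [lam]; have := ih 0; omega

/-- Offset between an occurrence of `w_n` and the image of an occurrence of `w_0`. -/
def cc (d : ℕ) : ℕ → ℕ → ℕ
  | 0, _ => 0
  | n + 1, m => cc d n (m + 1) + if n % (d - 1) = d - 2 then lam d m (d - 1) else 0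

/-- The bispecial factors. -/
def wn (d j n : ℕ) : List ℕ := ((fmap d)^[n] (Tinit d j)).2.1

theorem mod_succ_aux (p x y : ℕ) (h : x % p = y) : (x + 1) % p = (y + 1) % p := by
  subst h; simp

theorem st_fst (d j n : ℕ) : ((fmap d)^[n] (Tinit d j)).1 = n % (d - 1) := by
  induction n with
  | zero => simp [Tinit]; split_ifs <;> rfl
  | succ n ih =>
    rw [Function.iterate_succ_apply', fmap]
    simp only [ih]
    simp

theorem st_snd (d j n : ℕ) (hj : j ≤ d - 1) :
    ((fmap d)^[n] (Tinit d j)).2.2 = (j + n) % (d - 1) := by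
  induction n with
  | zero =>
    simp only [Function.iterate_zero, id, Tinit, Nat.add_zero]
    split_ifs with h
    · simp [h]
    · rw [Nat.mod_eq_of_lt]; omega
  | succ n ih =>
    rw [Function.iterate_succ_apply', fmap]
    simp only [ih]
    simp [add_assoc]

theorem wn_succ (d j n : ℕ) (hj : j ≤ d - 1) : wn d j (n + 1) =
    (if n % (d - 1) = d - 2 then [d - 1] else []) ++ phiW d (wn d j n) ++ [0] ++
     (if (j + n) % (d - 1) = d - 2 then [d - 1] else []) := by
  unfold wn
  rw [Function.iterate_succ_apply', fmap, st_fst, st_snd d j n hj]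

theorem wn_zero (d j : ℕ) : wn d j 0 = if j = d - 1 then [d - 1] else [] := by
  unfold wn
  simp only [Function.iterate_zero, id, Tinit]
  split_ifs <;> rfl

theorem phiW_le (d : ℕ) (w : List ℕ) : ∀ c ∈ phiW d w, c ≤ d - 1 := by
  intro c hc
  unfold phiW at hc
  rw [List.mem_flatMap] at hc
  obtain ⟨a, -, h⟩ := hc
  unfold phiL at h
  split_ifs at h <;> simp at h <;> omega

theorem wn_le (d j n : ℕ) (hj : j ≤ d - 1) : ∀ c ∈ wn d j n, c ≤ d - 1 := by
  intro c hc
  cases n with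
  | zero => rw [wn_zero] at hc; split_ifs at hc <;> simp at hc; omega
  | succ n =>
    rw [wn_succ d j n hj] at hc
    simp only [List.mem_append] at hc
    rcases hc with ((hc | hc) | hc) | hc
    · split_ifs at hc <;> simp at hc; omega
    · exact phiW_le _ _ _ hc
    · simp at hc; omega
    · split_ifs at hc <;> simp at hc; omega

/-- Desubstitution step. -/
theorem back_step (d : ℕ) (hd : 3 ≤ d) (u : ℕ → ℕ) (hu : IsPhiFixed d u) (j n : ℕ)
    (hj : j ≤ d - 1) (t : ℕ) (h : OccursAt (wn d j (n + 1)) u t) :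
    ∃ i, OccursAt (wn d j n) u i ∧
      (∀ m, Ssum d u m t + (if n % (d - 1) = d - 2 then lam d m (d - 1) else 0)
        = Ssum d u (m + 1) i) ∧
      ((j + n) % (d - 1) = d - 2 → d - 2 ≤ u (i + (wn d j n).length)) ∧
      ((j + n) % (d - 1) ≠ d - 2 → u (t + (wn d j (n + 1)).length)
        = min (u (i + (wn d j n).length) + 1) (d - 1)) := by
  have hle := wn_le d j n hj
  rw [wn_succ d j n hj] at h ⊢
  generalize wn d j n = w at *
  rw [occ_append] at h
  obtain ⟨h, hb⟩ := h
  rw [List.append_assoc, occ_append] at h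
  obtain ⟨ha, h⟩ := h
  obtain ⟨i, hi⟩ := zero_pos d hd u hu _ (occ_phi0 d u w _ h)
  rw [hi] at h
  obtain ⟨h1, h2⟩ := desub d hd u hu w hle i h
  have h3 := u_Phi1 d u hu (i + w.length)
  refine ⟨i, h1, ?_, ?_, ?_⟩
  · intro m
    rw [← Ssum_Phi d u hu, ← hi]
    split_ifs at ha ⊢ with hc
    · rw [occ_single] at ha
      rw [List.length_singleton, Ssum_succ, ha]
    · simp
  · intro hc
    rw [if_pos hc, occ_single] at hb
    have e : t + ((if n % (d - 1) = d - 2 then [d - 1] else []) ++ phiW d w ++ [0]).length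
        = Phi d u (i + w.length) + 1 := by
      rw [h2, ← hi]; simp only [List.length_append, List.length_singleton]; omega
    rw [e] at hb
    omega
  · intro hc
    rw [if_neg hc, ← h3]
    congr 1
    rw [h2, ← hi]; simp only [List.length_append, List.length_singleton, List.length_nil]; omega

theorem back (d : ℕ) (hd : 3 ≤ d) (u : ℕ → ℕ) (hu : IsPhiFixed d u) (j n : ℕ)
    (hj : j ≤ d - 1) (t : ℕ) (h : OccursAt (wn d j n) u t)
    (h' : j + n ≤ d - 2 → j + n ≤ u (t + (wn d j n).length)) :
    ∃ i, j ≤ u i ∧ ∀ m, Ssum d u m t + cc d n m = Ssum d u (m + n) i := by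
  induction n generalizing t with
  | zero =>
    refine ⟨t, ?_, fun m => by simp [cc]⟩
    rw [wn_zero] at h h'
    split_ifs at h h' with hc
    · rw [occ_single] at h; omega
    · simpa using h' (by omega)
  | succ n ih =>
    obtain ⟨i, h1, h2, h3, h4⟩ := back_step d hd u hu j n hj t h
    obtain ⟨i0, h5, h6⟩ := ih i h1 (by
      intro hjn
      rw [Nat.mod_eq_of_lt (by omega)] at h3 h4
      by_cases hc : j + n = d - 2
      · have := h3 hc; omega
      · have := h4 hc
        have := h' (by omega)
        omega)
    refine ⟨i0, h5, fun m => ?_⟩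
    have e1 := h2 m
    have e2 := h6 (m + 1)
    rw [cc, show m + (n + 1) = m + 1 + n by omega]
    omega

/-- Distance of two occurrences. -/
theorem gap_lower (d : ℕ) (hd : 3 ≤ d) (u : ℕ → ℕ) (hu : IsPhiFixed d u) (j n : ℕ)
    (hj : j ≤ d - 1) (hn : d - 1 ≤ n) (t t' : ℕ) (h : OccursAt (wn d j n) u t)
    (h' : OccursAt (wn d j n) u t') (htt : t < t') : t + lam d n j ≤ t' := by
  obtain ⟨i, hi, e⟩ := back d hd u hu j n hj t h (by omega)
  obtain ⟨i', -, e'⟩ := back d hd u hu j n hj t' h' (by omega)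
  have e := e 0
  have e' := e' 0
  simp only [Ssum_zero, Nat.zero_add] at e e'
  have hii : i < i' := by
    by_contra hc
    have := Ssum_mono d u n (not_lt.mp hc)
    omega
  have := Ssum_mono d u n hii
  rw [Nat.succ_eq_add_one, Ssum_succ] at this
  have := lam_mono d n hi
  omega

/-- Substitution. -/
theorem forth (d : ℕ) (hd : 3 ≤ d) (u : ℕ → ℕ) (hu : IsPhiFixed d u) (j n : ℕ)
    (hj : j ≤ d - 1) (i : ℕ) (h : OccursAt (wn d j 0) u (i + 1))
    (hl : u i = 0 ∨ u i = d - 1)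
    (hr : u (i + 1 + (wn d j 0).length) = j % (d - 1) ∨
      u (i + 1 + (wn d j 0).length) = d - 1) :
    ∃ t, OccursAt (wn d j n) u (t + 1) ∧ (u t = n % (d - 1) ∨ u t = d - 1) ∧
      (u (t + 1 + (wn d j n).length) = (j + n) % (d - 1) ∨
        u (t + 1 + (wn d j n).length) = d - 1) ∧
      ∀ m, Ssum d u m (t + 1) + cc d n m = Ssum d u (m + n) (i + 1) := by
  induction n with
  | zero => exact ⟨i, h, by simpa using hl, by simpa using hr, fun m => by simp [cc]⟩
  | succ n ih =>
    obtain ⟨s, h1, h2, h3, h4⟩ := ih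
    rw [wn_succ d j n hj]
    generalize wn d j n = w at *
    clear h hl hr
    obtain ⟨h5, h6⟩ := resub d u hu w _ h1
    have p0 := u_Phi d u hu (s + 1 + w.length)
    have p1 := u_Phi1 d u hu (s + 1 + w.length)
    have p2 := u_Phi2 d u hu (s + 1 + w.length)
    have p3 := Phi_succ d u (s + 1 + w.length)
    have p4 := u_Phi d u hu (s + 1 + w.length + 1)
    have q0 := u_Phi d u hu s
    have q1 := u_Phi1 d u hu s
    have q2 := u_Phi2 d u hu s
    have q3 := Phi_succ d u s
    have hsle := u_le d u hu s
    have ha : n % (d - 1) < d - 1 := Nat.mod_lt _ (by omega)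
    have hb : (j + n) % (d - 1) < d - 1 := Nat.mod_lt _ (by omega)
    have ha' : (n + 1) % (d - 1) = if n % (d - 1) = d - 2 then 0 else n % (d - 1) + 1 := by
      rw [mod_succ_aux _ _ _ rfl]
      split_ifs with hc
      · rw [hc, show d - 2 + 1 = d - 1 by omega, Nat.mod_self]
      · rw [Nat.mod_eq_of_lt]; omega
    have hb' : (j + (n + 1)) % (d - 1) =
        if (j + n) % (d - 1) = d - 2 then 0 else (j + n) % (d - 1) + 1 := by
      rw [← add_assoc, mod_succ_aux _ _ _ rfl]
      split_ifs with hc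
      · rw [hc, show d - 2 + 1 = d - 1 by omega, Nat.mod_self]
      · rw [Nat.mod_eq_of_lt]; omega
    rw [ha', hb']
    generalize hA : n % (d - 1) = a at *
    generalize (j + n) % (d - 1) = b at *
    -- right part
    have R : ∀ x, x + 1 = Phi d u (s + 1) + (phiW d w).length + 2 → 
        OccursAt (if b = d - 2 then [d - 1] else []) u x ∧
        (u (x + (if b = d - 2 then [d - 1] else []).length) = (if b = d - 2 then 0 else b + 1)
        ∨ u (x + (if b = d - 2 then [d - 1] else []).length) = d - 1) := by
      intro x hx
      obtain rfl : x = Phi d u (s + 1 + w.length) + 1 := by omega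
      split_ifs with hc
      · refine ⟨(occ_single _ _ _).2 (by omega), ?_⟩
        rw [List.length_singleton, show Phi d u (s + 1 + w.length) + 1 + 1 = 
          Phi d u (s + 1 + w.length) + 2 by omega]
        by_cases hc' : d - 1 ≤ u (s + 1 + w.length)
        · right; exact p2 hc'
        · left
          rw [if_neg hc'] at p3
          rw [p3] at p4
          exact p4
      · refine ⟨occ_nil _ _, ?_⟩
        rw [List.length_nil, Nat.add_zero, p1]
        omega
    have Lft : ∃ t, t + 1 + (if a = d - 2 then [d - 1] else []).length = Phi d u (s + 1) ∧
        (u t = (if a = d - 2 then 0 else a + 1) ∨ u t = d - 1) ∧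
        OccursAt (if a = d - 2 then [d - 1] else []) u (t + 1) := by
      split_ifs with hc
      · simp only [List.length_singleton, occ_single]
        by_cases hc' : d - 1 ≤ u s
        · rw [if_pos hc'] at q3
          exact ⟨Phi d u s + 1, by omega, by omega, q2 hc'⟩
        · rw [if_neg hc'] at q3
          exact ⟨Phi d u s, by omega, by omega, by omega⟩
      · simp only [List.length_nil, Nat.add_zero]
        by_cases hc' : d - 1 ≤ u s
        · rw [if_pos hc'] at q3
          exact ⟨Phi d u s + 2, by omega, by have := q2 hc'; omega, occ_nil _ _⟩
        · rw [if_neg hc'] at q3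
          exact ⟨Phi d u s + 1, by omega, by omega, occ_nil _ _⟩
    obtain ⟨t, ht1, ht2, ht3⟩ := Lft
    obtain ⟨R1, R2⟩ := R (t + 1 + ((if a = d - 2 then [d - 1] else []) ++ phiW d w ++ [0]).length)
      (by simp only [List.length_append, List.length_singleton]; omega)
    refine ⟨t, ?_, ht2, ?_, ?_⟩
    · rw [occ_append, occ_append, occ_append, occ_single]
      refine ⟨⟨⟨ht3, by rw [ht1]; exact h5⟩, ?_⟩, R1⟩
      rw [List.length_append, ← add_assoc, ht1, ← h6]
      exact p0
    · rw [List.length_append, ← add_assoc]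
      exact R2
    · intro m
      have e := h4 (m + 1)
      rw [cc, hA, show m + (n + 1) = m + 1 + n by omega, ← e, ← Ssum_Phi d u hu, ← ht1]
      split_ifs at ht3 ⊢ with hc
      · rw [occ_single] at ht3
        rw [List.length_singleton, Ssum_succ _ _ _ (t + 1), ht3]
        omega
      · simp

theorem exists_letter (d : ℕ) (u : ℕ → ℕ) (hu : IsPhiFixed d u) (c : ℕ) (hc : c ≤ d - 1) :
    ∃ i, u i = c := by
  induction c with
  | zero => exact ⟨0, hu.1⟩
  | succ c ih =>
    obtain ⟨i, hi⟩ := ih (by omega)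
    exact ⟨Phi d u i + 1, by rw [u_Phi1 d u hu, hi]; omega⟩

/-- The word `0(d-1)(d-1)0(d-1)` occurs. -/
theorem exists_pattern (d : ℕ) (u : ℕ → ℕ) (hu : IsPhiFixed d u) :
    ∃ i, u i = 0 ∧ u (i + 1) = d - 1 ∧ u (i + 2) = d - 1 ∧ u (i + 3) = 0 ∧ u (i + 4) = d - 1 := by
  obtain ⟨i, hi⟩ := exists_letter d u hu (d - 1) le_rfl
  have h1 := u_Phi1 d u hu i
  have h2 := u_Phi2 d u hu i (by omega)
  set k := Phi d u i + 1 with hk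
  have h1 : u k = d - 1 := by omega
  have h2 : u (k + 1) = d - 1 := by rw [← h2]
  have a0 := u_Phi d u hu k
  have a1 := u_Phi1 d u hu k
  have a2 := u_Phi2 d u hu k (by omega)
  have a3 := Phi_succ d u k
  have b0 := u_Phi d u hu (k + 1)
  have b1 := u_Phi1 d u hu (k + 1)
  rw [if_pos (by omega)] at a3
  rw [a3] at b0 b1
  exact ⟨Phi d u k, a0, by omega, a2, b0, by
    rw [show Phi d u k + 4 = Phi d u k + (2 + 1) + 1 by omega, b1]; omega⟩

/-- Two occurrences at the critical distance. -/
theorem gap_upper (d : ℕ) (hd : 3 ≤ d) (u : ℕ → ℕ) (hu : IsPhiFixed d u) (j n : ℕ)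
    (hj : j = 0 ∨ j = d - 1) :
    ∃ t, OccursAt (wn d j n) u t ∧ OccursAt (wn d j n) u (t + lam d n j) := by
  obtain ⟨k, k0, k1, k2, k3, k4⟩ := exists_pattern d u hu
  have key : ∃ i, u (i + 1) = j ∧ 
      (∃ t, OccursAt (wn d j n) u (t + 1) ∧ t + 1 + cc d n 0 = Ssum d u n (i + 1)) ∧
      (∃ t, OccursAt (wn d j n) u (t + 1) ∧ t + 1 + cc d n 0 = Ssum d u n (i + 1 + 1)) := by
    have H : ∀ i, OccursAt (wn d j 0) u (i + 1) → (u i = 0 ∨ u i = d - 1) →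
        (u (i + 1 + (wn d j 0).length) = j % (d - 1) ∨
        u (i + 1 + (wn d j 0).length) = d - 1) →
        (∃ t, OccursAt (wn d j n) u (t + 1) ∧ t + 1 + cc d n 0 = Ssum d u n (i + 1)) := by
      intro i h1 h2 h3
      obtain ⟨t, e1, -, -, e2⟩ := forth d hd u hu j n (by omega) i h1 h2 h3
      have := e2 0
      rw [Ssum_zero, Nat.zero_add] at this
      exact ⟨t, e1, this⟩
    rcases hj with rfl | rfl
    · have hw : wn d 0 0 = [] := by rw [wn_zero, if_neg (by omega)]
      rw [hw] at H
      exact ⟨k + 2, k3, H _ (occ_nil _ _) (Or.inr k2) (Or.inl (by simpa using k3)),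
        H _ (occ_nil _ _) (Or.inl k3) (Or.inr (by simpa using k4))⟩
    · have hw : wn d (d - 1) 0 = [d - 1] := by rw [wn_zero, if_pos rfl]
      rw [hw] at H
      exact ⟨k, k1, H _ ((occ_single _ _ _).2 k1) (Or.inl k0) (Or.inr (by simpa using k2)),
        H _ ((occ_single _ _ _).2 k2) (Or.inr k1) (Or.inl (by simpa using k3))⟩
  obtain ⟨i, hi, ⟨t, h1, h2⟩, ⟨t', h1', h2'⟩⟩ := key
  rw [Ssum_succ d u n (i + 1), hi] at h2'
  refine ⟨t + 1, h1, ?_⟩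
  rw [show t + 1 + lam d n j = t' + 1 by omega]
  exact h1'

theorem ret_lower (d : ℕ) (hd : 3 ≤ d) (u : ℕ → ℕ) (hu : IsPhiFixed d u) (j n : ℕ)
    (hj : j ≤ d - 1) (hn : d - 1 ≤ n) (r : List ℕ) (hr : ReturnWord u (wn d j n) r) :
    lam d n j ≤ r.length := by
  obtain ⟨t, t', h, h1, h2, -, rfl⟩ := hr
  have := gap_lower d hd u hu j n hj hn t t' h1 h2 h
  simp; omega

theorem ret_upper (d : ℕ) (hd : 3 ≤ d) (u : ℕ → ℕ) (hu : IsPhiFixed d u) (j n : ℕ)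
    (hj : j = 0 ∨ j = d - 1) (r : List ℕ)
    (hmin : ∀ r' : List ℕ, ReturnWord u (wn d j n) r' → r.length ≤ r'.length) :
    r.length ≤ lam d n j := by
  classical
  obtain ⟨t, h1, h2⟩ := gap_upper d hd u hu j n hj
  have hp := lam_pos d n j
  have hex : ∃ s, 0 < s ∧ OccursAt (wn d j n) u (t + s) := ⟨_, hp, h2⟩
  have hs := Nat.find_spec hex
  have hle := Nat.find_min' hex ⟨hp, h2⟩
  have := hmin _ ⟨t, t + Nat.find hex, by omega, h1, hs.2, fun m hm1 hm2 hm => by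
    refine Nat.find_min hex (m := m - t) (by omega) ⟨by omega, ?_⟩
    rwa [show t + (m - t) = m by omega], rfl⟩
  rw [List.length_map, List.length_range] at this
  omega

/-- Length of the `m`-th image of a word. -/
def wlam (d m : ℕ) (w : List ℕ) : ℕ := (w.map (lam d m)).sum

theorem wlam_append (d m : ℕ) (v w : List ℕ) : wlam d m (v ++ w) = wlam d m v + wlam d m w := by
  simp [wlam]

theorem wlam_phi (d m : ℕ) (w : List ℕ) (hw : ∀ c ∈ w, c ≤ d - 1) :
    wlam d m (phiW d w) = wlam d (m + 1) w := by
  induction w with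
  | nil => simp [wlam, phiW]
  | cons c w ih =>
    rw [phiW_cons, wlam_append, ih (fun c hc => hw c (by simp [hc]))]
    have hc := hw c (by simp)
    have : wlam d m (phiL d c) = lam d (m + 1) c := by
      unfold phiL
      rw [lam]
      split_ifs with h h' h'
      · omega
      · simp [wlam, show min (c + 1) (d - 1) = c + 1 by omega]
      · simp [wlam, show min (c + 1) (d - 1) = d - 1 by omega, add_assoc]
      · omega
    rw [this]
    simp [wlam]

theorem wlam_zero (d : ℕ) (w : List ℕ) : wlam d 0 w = w.length := by
  induction w with
  | nil => simp [wlam]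
  | cons c w ih => 
    simp only [wlam, List.map_cons, List.sum_cons, lam, List.length_cons] at ih ⊢
    omega

/-- Number of letters `d-1` added at step `n`. -/
def eps (d j n : ℕ) : ℕ :=
  (if n % (d - 1) = d - 2 then 1 else 0) + (if (j + n) % (d - 1) = d - 2 then 1 else 0)

theorem wlam_succ (d j n m : ℕ) (hj : j ≤ d - 1) : wlam d m (wn d j (n + 1)) =
    wlam d (m + 1) (wn d j n) + lam d m 0 + eps d j n * lam d m (d - 1) := by
  rw [wn_succ d j n hj, wlam_append, wlam_append, wlam_append, wlam_phi _ _ _ (wn_le d j n hj), eps,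
    add_mul]
  split_ifs <;> simp [wlam] <;> ring

/-- Left eigenvector of the incidence matrix. -/
noncomputable def ell (L : ℝ) (c : ℕ) : ℝ := ((L - 2) * L ^ c + 1) / (L - 1)

theorem ell_zero (L : ℝ) (h1 : 2 < L) : ell L 0 = 1 := by
  unfold ell
  have : L - 1 ≠ 0 := by linarith
  field_simp
  ring

theorem ell_succ (L : ℝ) (h1 : 2 < L) (c : ℕ) : L * ell L c = 1 + ell L (c + 1) := by
  unfold ell
  have : L - 1 ≠ 0 := by linarith
  field_simp
  ring

theorem ell_last (L : ℝ) (p : ℕ) (h1 : 2 < L) (h : L ^ p * (L - 2) ^ 2 = 1) :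
    ell L p = 1 / (L - 2) := by
  unfold ell
  have h2 : L - 1 ≠ 0 := by linarith
  have h3 : L - 2 ≠ 0 := by linarith
  field_simp
  linear_combination h

theorem ell_pos (L : ℝ) (h1 : 2 < L) (c : ℕ) : 0 < ell L c := by
  unfold ell
  have h2 : 0 < L - 1 := by linarith
  have h3 : 0 < L - 2 := by linarith
  positivity

theorem ell_mono (L : ℝ) (h1 : 2 < L) {c c' : ℕ} (h : c ≤ c') : ell L c ≤ ell L c' := by
  unfold ell
  have h2 : 0 < L - 1 := by linarith
  have h3 : 0 < L - 2 := by linarith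
  have : L ^ c ≤ L ^ c' := pow_le_pow_right₀ (by linarith) h
  gcongr

/-- Normalized lengths. -/
noncomputable def nl (d : ℕ) (L : ℝ) (n c : ℕ) : ℝ := lam d n c / (L ^ n * ell L c)

/-- One step of the normalized lengths is an averaging. -/
theorem nl_succ (d : ℕ) (L : ℝ) (h1 : 2 < L) (h : L ^ (d - 1) * (L - 2) ^ 2 = 1)
    (n c : ℕ) (hc : c ≤ d - 1) :
    nl d L (n + 1) c = 1 / (L * ell L c) * nl d L n 0 +
      (1 - 1 / (L * ell L c)) * nl d L n (min (c + 1) (d - 1)) := by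
  have hL : L ≠ 0 := by linarith
  have e0 := ell_zero L h1
  have ep := (ell_pos L h1 c).ne'
  have ep' := (ell_pos L h1 (min (c + 1) (d - 1))).ne'
  unfold nl
  rw [lam, e0]
  by_cases hcd : d - 1 ≤ c
  · obtain rfl : c = d - 1 := by omega
    have hm : min (d - 1 + 1) (d - 1) = d - 1 := by omega
    have hl := ell_last L _ h1 h
    have h3 : L - 2 ≠ 0 := by linarith
    rw [if_pos hcd, hm, hl]
    push_cast
    field_simp
    ring
  · have hm : min (c + 1) (d - 1) = c + 1 := by omega
    rw [hm] at ep' ⊢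
    rw [if_neg hcd]
    have hs := ell_succ L h1 c
    have hne : 1 + ell L (c + 1) ≠ 0 := by
      have := ell_pos L h1 (c + 1)
      positivity
    have : ell L c = (1 + ell L (c + 1)) / L := by field_simp; linarith
    rw [this]
    push_cast
    field_simp
    ring

theorem avg_aux (q q' δ x0 y y' B : ℝ) (hq : δ ≤ q) (hq1 : q ≤ 1) (hq' : δ ≤ q') (hq1' : q' ≤ 1)
    (h1 : y - y' ≤ B) (h2 : x0 - y' ≤ B) (h3 : y - x0 ≤ B) (hB : 0 ≤ B) :
    (q * x0 + (1 - q) * y) - (q' * x0 + (1 - q') * y') ≤ (1 - δ) * B := by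
  rcases le_total q q' with h | h
  · have e1 : 0 ≤ (1 - q') * (B - (y - y')) := mul_nonneg (by linarith) (by linarith)
    have e2 : 0 ≤ (q' - q) * (B - (y - x0)) := mul_nonneg (by linarith) (by linarith)
    have e3 : 0 ≤ (q - δ) * B := mul_nonneg (by linarith) hB
    nlinarith
  · have e1 : 0 ≤ (1 - q) * (B - (y - y')) := mul_nonneg (by linarith) (by linarith)
    have e2 : 0 ≤ (q - q') * (B - (x0 - y')) := mul_nonneg (by linarith) (by linarith)
    have e3 : 0 ≤ (q' - δ) * B := mul_nonneg (by linarith) hB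
    nlinarith

theorem q_bounds (d : ℕ) (L : ℝ) (h1 : 2 < L) (h : L ^ (d - 1) * (L - 2) ^ 2 = 1)
    (c : ℕ) (hc : c ≤ d - 1) :
    1 - 2 / L ≤ 1 / (L * ell L c) ∧ 1 / (L * ell L c) ≤ 1 := by
  have e1 := ell_mono L h1 hc
  have e2 := ell_mono L h1 (Nat.zero_le c)
  rw [ell_zero L h1] at e2
  rw [ell_last L _ h1 h] at e1
  have h3 : 0 < L - 2 := by linarith
  have hL : 0 < L := by linarith
  have hp := ell_pos L h1 c
  constructor
  · rw [le_div_iff₀ (by positivity)]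
    have : (1 - 2 / L) * (L * ell L c) = (L - 2) * ell L c := by field_simp
    rw [this]
    rw [le_div_iff₀ h3] at e1
    linarith
  · rw [div_le_one (by positivity)]
    nlinarith

theorem nl_osc (d : ℕ) (L : ℝ) (h1 : 2 < L) (h : L ^ (d - 1) * (L - 2) ^ 2 = 1)
    (n : ℕ) : ∀ c c', c ≤ d - 1 → c' ≤ d - 1 → nl d L n c - nl d L n c' ≤ (2 / L) ^ n := by
  induction n with
  | zero =>
    intro c c' _ _
    have e2 := ell_mono L h1 (Nat.zero_le c)
    rw [ell_zero L h1] at e2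
    have hp := ell_pos L h1 c'
    have : 0 ≤ nl d L 0 c' := by simp [nl, lam]; positivity
    have h5 : nl d L 0 c ≤ 1 := by
      simp only [nl, lam, pow_zero, one_mul, Nat.cast_one]
      rw [div_le_one (by linarith)]; exact e2
    simp; linarith
  | succ n ih =>
    intro c c' hc hc'
    rw [nl_succ d L h1 h n c hc, nl_succ d L h1 h n c' hc']
    obtain ⟨a1, a2⟩ := q_bounds d L h1 h c hc
    obtain ⟨b1, b2⟩ := q_bounds d L h1 h c' hc'
    have := avg_aux _ _ (1 - 2 / L) (nl d L n 0) (nl d L n (min (c + 1) (d - 1)))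
      (nl d L n (min (c' + 1) (d - 1))) ((2 / L) ^ n) a1 a2 b1 b2
      (ih _ _ (by omega) (by omega)) (ih _ _ (by omega) (by omega)) (ih _ _ (by omega) (by omega))
      (by positivity)
    rw [pow_succ']
    linarith

theorem nl_lower (d : ℕ) (L : ℝ) (h1 : 2 < L) (h : L ^ (d - 1) * (L - 2) ^ 2 = 1)
    (n : ℕ) : ∀ c, c ≤ d - 1 → L - 2 ≤ nl d L n c := by
  induction n with
  | zero =>
    intro c hc
    have e1 := ell_mono L h1 hc
    rw [ell_last L _ h1 h] at e1
    have hp := ell_pos L h1 c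
    simp only [nl, lam, pow_zero, one_mul, Nat.cast_one]
    rw [le_div_iff₀ hp]
    rw [le_div_iff₀ (by linarith)] at e1
    linarith
  | succ n ih =>
    intro c hc
    rw [nl_succ d L h1 h n c hc]
    obtain ⟨a1, a2⟩ := q_bounds d L h1 h c hc
    have hL : 2 / L ≤ 1 := by rw [div_le_one (by linarith)]; linarith
    nlinarith [ih 0 (by omega), ih (min (c + 1) (d - 1)) (by omega)]

theorem nl_limit (d : ℕ) (L : ℝ) (h1 : 2 < L) (h : L ^ (d - 1) * (L - 2) ^ 2 = 1) :
    ∃ C K : ℝ, 0 < C ∧ 0 ≤ K ∧ ∀ n c, c ≤ d - 1 →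
      |(lam d n c : ℝ) - C * (L ^ n * ell L c)| ≤ K * 2 ^ n := by
  have hL0 : 0 < L := by linarith
  have hρ : 2 / L < 1 := by rw [div_lt_one hL0]; exact h1
  have hstep : ∀ n, dist (nl d L n 0) (nl d L (n + 1) 0) ≤ 1 * (2 / L) ^ n := by
    intro n
    obtain ⟨a1, a2⟩ := q_bounds d L h1 h 0 (by omega)
    rw [one_mul, Real.dist_eq, nl_succ d L h1 h n 0 (by omega)]
    set q := 1 / (L * ell L 0)
    have o1 := nl_osc d L h1 h n 0 (min (0 + 1) (d - 1)) (by omega) (by omega)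
    have o2 := nl_osc d L h1 h n (min (0 + 1) (d - 1)) 0 (by omega) (by omega)
    have hp : 0 ≤ (2 / L) ^ n := by positivity
    have hq : 0 ≤ 1 - q := by linarith
    have hq0 : 0 ≤ q := by linarith
    rw [abs_le]
    constructor <;> nlinarith
  have hc := cauchySeq_of_le_geometric (2 / L) 1 hρ hstep
  obtain ⟨C, hC⟩ := cauchySeq_tendsto_of_complete hc
  have hd' := dist_le_of_le_geometric_of_tendsto (2 / L) 1 hρ hstep hC
  have hCpos : L - 2 ≤ C := ge_of_tendsto' hC fun n => nl_lower d L h1 h n 0 (by omega)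
  have hρ' : 0 < 1 - 2 / L := by linarith
  have h3 : 0 < L - 2 := by linarith
  refine ⟨C, (1 / (1 - 2 / L) + 1) * (1 / (L - 2)), by linarith, by positivity, ?_⟩
  intro n c hcd
  have hp := ell_pos L h1 c
  have e1 := ell_mono L h1 hcd
  rw [ell_last L _ h1 h] at e1
  have hb : |nl d L n c - C| ≤ (1 / (1 - 2 / L) + 1) * (2 / L) ^ n := by
    have o1 := nl_osc d L h1 h n 0 c (by omega) (by omega)
    have o2 := nl_osc d L h1 h n c 0 (by omega) (by omega)
    have o3 := hd' n
    rw [Real.dist_eq, abs_le] at o3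
    have : (1 / (1 - 2 / L) + 1) * (2 / L) ^ n = 1 * (2 / L) ^ n / (1 - 2 / L) + (2 / L) ^ n := by
      field_simp
    rw [this, abs_le]
    constructor <;> linarith
  have e : (lam d n c : ℝ) - C * (L ^ n * ell L c) = (nl d L n c - C) * (L ^ n * ell L c) := by
    unfold nl; field_simp
  rw [e, abs_mul, abs_of_pos (show 0 < L ^ n * ell L c by positivity)]
  calc _ ≤ ((1 / (1 - 2 / L) + 1) * (2 / L) ^ n) * (L ^ n * (1 / (L - 2))) := by gcongr
    _ = _ := by rw [div_pow]; field_simp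

/-- Periodic correction term. -/
noncomputable def Aper (L : ℝ) (p n : ℕ) : ℝ := L ^ (n % p) / (L ^ p - 1)

theorem Aper_succ (L : ℝ) (p : ℕ) (hp : 2 ≤ p) (h1 : 2 < L) (n : ℕ) :
    Aper L p (n + 1) = L * Aper L p n - if n % p = p - 1 then 1 else 0 := by
  have hb : n % p < p := Nat.mod_lt _ (by omega)
  have hne : L ^ p - 1 ≠ 0 := by
    have : 1 < L ^ p := one_lt_pow₀ (by linarith) (by omega)
    linarith
  unfold Aper
  rw [mod_succ_aux _ _ _ rfl]
  split_ifs with hc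
  · rw [hc, show p - 1 + 1 = p by omega, Nat.mod_self, pow_zero]
    have : L ^ p = L * L ^ (p - 1) := by rw [← pow_succ']; congr 1; omega
    field_simp
    linarith
  · rw [Nat.mod_eq_of_lt (by omega), pow_succ]
    ring

theorem Aper_nonneg (L : ℝ) (p : ℕ) (hp : 2 ≤ p) (h1 : 2 < L) (n : ℕ) :
    0 ≤ Aper L p n ∧ Aper L p n ≤ L ^ p / (L ^ p - 1) := by
  have : 1 < L ^ p := one_lt_pow₀ (by linarith) (by omega)
  have h2 : 0 < L ^ p - 1 := by linarith
  have hb : n % p < p := Nat.mod_lt _ (by omega)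
  have h3 : L ^ (n % p) ≤ L ^ p := pow_le_pow_right₀ (by linarith) hb.le
  unfold Aper
  constructor
  · positivity
  · gcongr

noncomputable def qper (L : ℝ) (p j n : ℕ) : ℝ :=
  1 / (L - 1) + (Aper L p n + Aper L p (j + n)) / (L - 2)

theorem qper_succ (L : ℝ) (d : ℕ) (hd : 3 ≤ d) (h1 : 2 < L) (j n : ℕ) :
    qper L (d - 1) j (n + 1) = L * qper L (d - 1) j n - 1 - eps d j n / (L - 2) := by
  have h3 : L - 2 ≠ 0 := by linarith
  have h2 : L - 1 ≠ 0 := by linarith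
  unfold qper eps
  rw [← add_assoc, Aper_succ L _ (by omega) h1, Aper_succ L _ (by omega) h1,
    show d - 1 - 1 = d - 2 by omega]
  push_cast
  field_simp
  ring

/-- Limit weight. -/
noncomputable def Wlim (L : ℝ) (d j : ℕ) : ℝ :=
  (if j = d - 1 then 1 / (L - 2) else 0) + qper L (d - 1) j 0

theorem Wlim_eq (L : ℝ) (d : ℕ) (hd : 3 ≤ d) (h1 : 2 < L) (h2 : L < 3)
    (h : L ^ (d - 1) * (L - 2) ^ 2 = 1) (j : ℕ) (hj : j ≤ d - 1) :
    ell L j = (3 - L) * Wlim L d j := by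
  have h3 : L - 2 ≠ 0 := by linarith
  have h4 : L - 1 ≠ 0 := by linarith
  have h5 : 3 - L ≠ 0 := by linarith
  have hP : L ^ (d - 1) = 1 / (L - 2) ^ 2 := by field_simp; linarith
  have hP' : L ^ (d - 1) - 1 = (L - 1) * (3 - L) / (L - 2) ^ 2 := by
    rw [hP]; field_simp; ring
  unfold Wlim qper Aper
  rw [hP']
  split_ifs with hc
  · rw [hc, ell_last L _ h1 h]
    simp only [Nat.add_zero, Nat.mod_self, Nat.zero_mod, pow_zero]
    field_simp
    ring
  · rw [Nat.add_zero, Nat.mod_eq_of_lt (show j < d - 1 by omega)]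
    unfold ell
    simp only [Nat.zero_mod, pow_zero]
    field_simp
    ring

theorem wlam_bound (L : ℝ) (d : ℕ) (hd : 3 ≤ d) (h1 : 2 < L)
    (h : L ^ (d - 1) * (L - 2) ^ 2 = 1) (j : ℕ) (hj : j ≤ d - 1) (C K : ℝ) (hK : 0 ≤ K)
    (H : ∀ n c, c ≤ d - 1 → |(lam d n c : ℝ) - C * (L ^ n * ell L c)| ≤ K * 2 ^ n) (n : ℕ) :
    ∀ m, |(wlam d m (wn d j n) : ℝ) - C * L ^ m * (L ^ n * Wlim L d j - qper L (d - 1) j n)|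
      ≤ K * 2 ^ m * (4 * 2 ^ n - 3) := by
  induction n with
  | zero =>
    intro m
    have := H m (d - 1) le_rfl
    rw [wn_zero]
    unfold Wlim
    split_ifs
    · rw [ell_last L _ h1 h] at this
      simp only [wlam, List.map_cons, List.map_nil, List.sum_cons, List.sum_nil, Nat.add_zero]
      have e : C * L ^ m * (L ^ 0 * (1 / (L - 2) + qper L (d - 1) j 0) - qper L (d - 1) j 0) =
          C * (L ^ m * (1 / (L - 2))) := by ring
      have e' : K * 2 ^ m * (4 * 2 ^ 0 - 3) = K * 2 ^ m := by ring
      rw [e, e']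
      exact this
    · simp [wlam]; norm_num; positivity
  | succ n ih =>
    intro m
    rw [wlam_succ d j n m hj, qper_succ L d hd h1]
    have e1 := ih (m + 1)
    have e2 := H m 0 (by omega)
    have e3 := H m (d - 1) le_rfl
    rw [ell_zero L h1] at e2
    rw [ell_last L _ h1 h] at e3
    have he : (eps d j n : ℝ) ≤ 2 := by
      have : eps d j n ≤ 2 := by unfold eps; split_ifs <;> omega
      exact_mod_cast this
    have he0 : (0 : ℝ) ≤ eps d j n := by positivity
    have hx : (0 : ℝ) ≤ K * 2 ^ m := by positivity
    have e4 : |(eps d j n : ℝ) * ((lam d m (d - 1) : ℝ) - C * (L ^ m * (1 / (L - 2))))|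
        ≤ 2 * (K * 2 ^ m) := by
      rw [abs_mul, abs_of_nonneg he0]
      gcongr
    push_cast
    have key : ((wlam d (m + 1) (wn d j n) : ℝ) + lam d m 0 + eps d j n * lam d m (d - 1)) -
        C * L ^ m * (L ^ (n + 1) * Wlim L d j -
          (L * qper L (d - 1) j n - 1 - eps d j n / (L - 2))) =
        (wlam d (m + 1) (wn d j n) - C * L ^ (m + 1) * (L ^ n * Wlim L d j - qper L (d - 1) j n))
        + (lam d m 0 - C * (L ^ m * 1))
        + eps d j n * ((lam d m (d - 1) : ℝ) - C * (L ^ m * (1 / (L - 2)))) := by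
      ring
    rw [key]
    refine (abs_add_three _ _ _).trans ?_
    have : K * 2 ^ m * (4 * 2 ^ (n + 1) - 3) = K * 2 ^ (m + 1) * (4 * 2 ^ n - 3) +
      K * 2 ^ m + 2 * (K * 2 ^ m) := by ring
    rw [this]
    gcongr

open Filter Topology in
theorem main_limit (L : ℝ) (d : ℕ) (hd : 3 ≤ d) (h1 : 2 < L) (h2 : L < 3)
    (h : L ^ (d - 1) * (L - 2) ^ 2 = 1) (j : ℕ) (hj : j ≤ d - 1) :
    Tendsto (fun n => ((wn d j n).length : ℝ) / (lam d n j : ℝ)) atTop (𝓝 (1 / (3 - L))) := by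
  obtain ⟨C, K, hC, hK, H⟩ := nl_limit d L h1 h
  have hB := wlam_bound L d hd h1 h j hj C K hK H
  have hL0 : 0 < L := by linarith
  have h3 : 0 < L - 2 := by linarith
  have t1 : Tendsto (fun n : ℕ => (2 / L) ^ n) atTop (𝓝 0) :=
    tendsto_pow_atTop_nhds_zero_of_lt_one (by positivity) (by rw [div_lt_one hL0]; exact h1)
  have hell := ell_pos L h1 j
  have hden : Tendsto (fun n => (lam d n j : ℝ) / L ^ n) atTop (𝓝 (C * ell L j)) := by
    rw [tendsto_iff_dist_tendsto_zero]
    refine squeeze_zero (fun _ => dist_nonneg) (fun n => ?_)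
      (by simpa using t1.const_mul K)
    rw [Real.dist_eq]
    have : (lam d n j : ℝ) / L ^ n - C * ell L j = (lam d n j - C * (L ^ n * ell L j)) / L ^ n := by
      field_simp
    rw [this, abs_div, abs_of_pos (show 0 < L ^ n by positivity), div_le_iff₀ (by positivity),
      div_pow]
    have := H n j hj
    rw [show K * (2 ^ n / L ^ n) * L ^ n = K * 2 ^ n by field_simp]
    exact this
  obtain ⟨Q, hQ⟩ : ∃ Q, ∀ n, |qper L (d - 1) j n| ≤ Q := by
    refine ⟨1 / (L - 1) + (L ^ (d - 1) / (L ^ (d - 1) - 1) + L ^ (d - 1) / (L ^ (d - 1) - 1))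
      / (L - 2), fun n => ?_⟩
    have a := Aper_nonneg L (d - 1) (by omega) h1 n
    have b := Aper_nonneg L (d - 1) (by omega) h1 (j + n)
    have h4 : 0 < L - 1 := by linarith
    have : 0 ≤ qper L (d - 1) j n := by
      unfold qper
      have := a.1
      have := b.1
      positivity
    rw [abs_of_nonneg this]
    unfold qper
    have := a.2
    have := b.2
    gcongr
  have hQ0 : 0 ≤ Q := (abs_nonneg _).trans (hQ 0)
  have hnum : Tendsto (fun n => ((wn d j n).length : ℝ) / L ^ n) atTop (𝓝 (C * Wlim L d j)) := by
    rw [tendsto_iff_dist_tendsto_zero]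
    refine squeeze_zero (fun _ => dist_nonneg) (fun n => ?_)
      (by simpa using t1.const_mul (K * 4 + C * Q))
    have e := hB n 0
    rw [wlam_zero, pow_zero, pow_zero, mul_one, mul_one] at e
    rw [Real.dist_eq]
    have : ((wn d j n).length : ℝ) / L ^ n - C * Wlim L d j =
        (((wn d j n).length - C * (L ^ n * Wlim L d j - qper L (d - 1) j n)) +
          (- (C * qper L (d - 1) j n))) / L ^ n := by
      field_simp; ring
    rw [this, abs_div, abs_of_pos (show 0 < L ^ n by positivity), div_le_iff₀ (by positivity),
      div_pow]
    refine (abs_add_le _ _).trans ?_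
    rw [abs_neg, abs_mul, abs_of_pos hC]
    have e5 : C * |qper L (d - 1) j n| ≤ C * Q := by gcongr; exact hQ n
    have e6 : (1 : ℝ) ≤ 2 ^ n := one_le_pow₀ (by norm_num)
    have e7 : C * Q ≤ C * Q * 2 ^ n := le_mul_of_one_le_right (by positivity) e6
    have e8 : (K * 4 + C * Q) * (2 ^ n / L ^ n) * L ^ n = K * (4 * 2 ^ n) + C * Q * 2 ^ n := by
      field_simp
    rw [e8]
    nlinarith
  have hdiv := hnum.div hden (by positivity)
  have e := Wlim_eq L d hd h1 h2 h j hj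
  have h5 : 0 < 3 - L := by linarith
  have hW : Wlim L d j ≠ 0 := by
    intro h0; rw [h0, mul_zero] at e; linarith
  have e' : C * Wlim L d j / (C * ell L j) = 1 / (3 - L) := by
    rw [e]; field_simp
  rw [e'] at hdiv
  refine hdiv.congr fun n => ?_
  simp only [Pi.div_apply]
  field_simp

/-- Let `d ≥ 3`, `k ≤ d−1`, let `w_n` be the middle component of
`f^n(T_{d−1−k})` and `r_n` a shortest return word to `w_n` in `u_d`. Then
`limsup |w_n|/|r_n| ≤ 1/(3 − Λ_d)`, where `Λ_d` is the unique real in `(2,3)` with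
`Λ_d^{d−1}(Λ_d−2)^2 = 1`, and equality holds for `k = 0` and `k = d−1`. -/
theorem statement18 (d : ℕ) (hd : 3 ≤ d) (u : ℕ → ℕ) (hu : IsPhiFixed d u)
    (k : ℕ) (hk : k ≤ d - 1)
    (Λ : ℝ) (hΛ1 : 2 < Λ) (hΛ2 : Λ < 3) (hΛ : Λ ^ (d - 1) * (Λ - 2) ^ 2 = 1)
    (w : ℕ → List ℕ) (hw : ∀ n, w n = ((fmap d)^[n] (Tinit d (d - 1 - k))).2.1)
    (r : ℕ → List ℕ) (hr : ∀ n, ReturnWord u (w n) (r n))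
    (hrmin : ∀ n, ∀ r' : List ℕ, ReturnWord u (w n) r' → (r n).length ≤ r'.length) :
    Filter.limsup (fun n : ℕ => ((w n).length : ℝ) / ((r n).length : ℝ))
        Filter.atTop ≤ 1 / (3 - Λ) ∧
    ((k = 0 ∨ k = d - 1) →
      Filter.limsup (fun n : ℕ => ((w n).length : ℝ) / ((r n).length : ℝ))
        Filter.atTop = 1 / (3 - Λ)) := by
  have hj : d - 1 - k ≤ d - 1 := by omega
  obtain rfl : w = wn d (d - 1 - k) := funext hw
  generalize hjk : d - 1 - k = j at *
  have hlim := main_limit Λ d hd hΛ1 hΛ2 hΛ j hj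
  have hle : ∀ᶠ n in Filter.atTop, ((wn d j n).length : ℝ) / ((r n).length : ℝ) ≤
      ((wn d j n).length : ℝ) / (lam d n j : ℝ) := by
    filter_upwards [Filter.eventually_ge_atTop (d - 1)] with n hn
    have h1 := ret_lower d hd u hu j n hj hn (r n) (hr n)
    have h2 := lam_pos d n j
    have h1' : (lam d n j : ℝ) ≤ ((r n).length : ℝ) := by exact_mod_cast h1
    have h2' : (0 : ℝ) < lam d n j := by exact_mod_cast h2
    gcongr
  constructor
  · rw [← hlim.limsup_eq]
    refine Filter.limsup_le_limsup hle ?_ hlim.isBoundedUnder_le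
    refine Filter.IsBoundedUnder.isCoboundedUnder_le ⟨0, ?_⟩
    rw [Filter.eventually_map]
    exact Filter.Eventually.of_forall fun n => by positivity
  · intro hk'
    have hj' : j = 0 ∨ j = d - 1 := by omega
    rw [← hlim.limsup_eq]
    refine Filter.limsup_congr ?_
    filter_upwards [Filter.eventually_ge_atTop (d - 1)] with n hn
    have h1 := ret_lower d hd u hu j n hj hn (r n) (hr n)
    have h2 := ret_upper d hd u hu j n hj' (r n) (hrmin n)
    rw [le_antisymm h2 h1]
end RichRT
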